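/- Gauss–Laguerre cubature for the Laguerre unitary ensemble: for α > −1 and every f ∈ ℙ^{(2m+1,n)}, (1/n!) ∫_0^∞⋯∫_0^∞ f(x) Π_{j=1}^n x_j^α e^{−x_j} Π_{1≤j<k≤n}(x_j−x_k)² dx_1⋯dx_n = Σ_{λ̂ ∈ Λ^{(m,n)}} f(x_λ̂^{(m,n)}) W_λ̂, where W_λ̂ = (m+n)^{−n} Π_{j=1}^n (x^{(m+n)}_{λ̂_j+n−j})^{−1} (ℓ^{(α+1)}_{m+n−1}(x^{(m+n)}_{λ̂_j+n−j}))^{−2} · Π_{1≤j<k≤n}(x^{(m+n)}_{λ̂_j+n−j} − x^{(m+n)}_{λ̂_k+n−k})². -/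

import Mathlib

open MeasureTheory Real Finset

noncomputable section

/-- Vandermonde product `∏_{j<k} (x_j - x_k)`. -/
def vand (n : ℕ) (x : Fin n → ℝ) : ℝ :=
  ∏ j : Fin n, ∏ k ∈ Finset.univ.filter (fun k => j < k), (x j - x k)

/-- The fundamental alcove `Λ^{(m,n)}` : decreasing sequences with entries ≤ m. -/
def Lam (m n : ℕ) : Finset (Fin n → ℕ) :=
  (Fintype.piFinset fun _ => Finset.range (m + 1)).filter
    fun lam => ∀ i j : Fin n, i ≤ j → lam j ≤ lam i

/-- The node `x^{(m,n)}_λ̂` with `j`-th component `x^{(m+n)}_{λ̂_j + n - j}`. -/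
def node (n : ℕ) (xr : ℕ → ℝ) (lh : Fin n → ℕ) : Fin n → ℝ :=
  fun j => xr (lh j + (n - 1 - (j : ℕ)))

/-- The symmetric monomial `M_λ(x)`. -/
def msym (n : ℕ) (lam : Fin n → ℕ) : (Fin n → ℝ) → ℝ := fun x =>
  ∑ mu ∈ Finset.univ.image (fun σ : Equiv.Perm (Fin n) => lam ∘ σ), ∏ j : Fin n, x j ^ mu j

/-- The space `ℙ^{(m,n)}`: span of the symmetric monomials `M_λ`, `λ ∈ Λ^{(m,n)}`. -/
def pSpace (m n : ℕ) : Submodule ℝ ((Fin n → ℝ) → ℝ) :=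
  Submodule.span ℝ (msym n '' (Lam m n : Set (Fin n → ℕ)))

open Polynomial in
lemma aux_reduce (s r : ℝ[X]) (d : ℕ) (hs : s.degree = d) (hr : r.degree < ((d + 1 : ℕ) : WithBot ℕ)) :
    (r - C (r.coeff d / s.coeff d) * s).degree < d := by
  have hs0 : s.coeff d ≠ 0 := Polynomial.coeff_ne_zero_of_eq_degree hs
  rw [Polynomial.degree_lt_iff_coeff_zero] at hr ⊢
  intro k hk
  rcases hk.eq_or_lt with h | h
  · subst h
    simp [hs0]
  · have h1 : s.coeff k = 0 := Polynomial.coeff_eq_zero_of_degree_lt (by rw [hs]; exact_mod_cast h)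
    simp [hr k h, h1]

open Polynomial in
lemma aux_orth_zero (I : ℝ[X] →ₗ[ℝ] ℝ) (p : ℕ → ℝ[X]) (hdeg : ∀ l, (p l).degree = l)
    (horth : ∀ l k, I (p l * p k) = if l = k then 1 else 0) (N : ℕ) :
    ∀ d ≤ N, ∀ r : ℝ[X], r.degree < d → I (p N * r) = 0 := by
  intro d
  induction d with
  | zero =>
    intro _ r hr
    have : r = 0 := by
      rw [Polynomial.degree_lt_iff_coeff_zero] at hr
      ext k; simpa using hr k (Nat.zero_le _)
    simp [this]
  | succ d ih =>
    intro hd r hr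
    have h1 := ih (by omega) _ (aux_reduce (p d) r d (hdeg d) hr)
    rw [mul_sub, map_sub, mul_left_comm, ← smul_eq_C_mul, map_smul, horth, if_neg (by omega)] at h1
    simpa using h1

open Polynomial in
lemma aux_orth_coeff (I : ℝ[X] →ₗ[ℝ] ℝ) (p : ℕ → ℝ[X]) (hdeg : ∀ l, (p l).degree = l)
    (horth : ∀ l k, I (p l * p k) = if l = k then 1 else 0) (N : ℕ) (r : ℝ[X])
    (hr : r.degree < ((N + 1 : ℕ) : WithBot ℕ)) :
    I (p N * r) = r.coeff N / (p N).coeff N := by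
  have h1 := aux_orth_zero I p hdeg horth N N le_rfl _ (aux_reduce (p N) r N (hdeg N) hr)
  rw [mul_sub, map_sub, mul_left_comm, ← smul_eq_C_mul, map_smul, horth, if_pos rfl] at h1
  simp at h1
  linarith

open Polynomial in
lemma aux_orth_eq_zero (I : ℝ[X] →ₗ[ℝ] ℝ) (p : ℕ → ℝ[X]) (hdeg : ∀ l, (p l).degree = l)
    (horth : ∀ l k, I (p l * p k) = if l = k then 1 else 0) :
    ∀ (N : ℕ) (r : ℝ[X]), r.degree < N → (∀ k < N, I (p k * r) = 0) → r = 0 := by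
  intro N
  induction N with
  | zero =>
    intro r hr _
    rw [Polynomial.degree_lt_iff_coeff_zero] at hr
    ext k; simpa using hr k (Nat.zero_le _)
  | succ N ih =>
    intro r hr h
    have h1 := aux_orth_coeff I p hdeg horth N r hr
    rw [h N (by omega)] at h1
    have h2 : (p N).coeff N ≠ 0 := Polynomial.coeff_ne_zero_of_eq_degree (hdeg N)
    have h3 : r.coeff N = 0 := by
      rcases div_eq_zero_iff.1 h1.symm with h | h
      · exact h
      · exact absurd h h2
    apply ih r _ (fun k hk => h k (by omega))
    rw [Polynomial.degree_lt_iff_coeff_zero] at hr ⊢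
    intro k hk
    rcases hk.eq_or_lt with h | h
    · rw [← h, h3]
    · exact hr k h

open Polynomial in
lemma aux_gauss (I : ℝ[X] →ₗ[ℝ] ℝ) (p : ℕ → ℝ[X]) (hdeg : ∀ l, (p l).degree = l)
    (horth : ∀ l k, I (p l * p k) = if l = k then 1 else 0) (N : ℕ) (v : ℕ → ℝ)
    (hv : Set.InjOn v (range N : Finset ℕ)) (hroot : ∀ k < N, (p N).eval (v k) = 0)
    (P : ℝ[X]) (hP : P.degree < ((2 * N : ℕ) : WithBot ℕ)) :
    I P = ∑ k ∈ range N, P.eval (v k) * I (Lagrange.basis (range N) v k) := by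
  have hp0 : p N ≠ 0 := by
    intro h; have := hdeg N; rw [h] at this; simp at this
  have hPe : p N * (P / p N) + P % p N = P := EuclideanDomain.div_add_mod P (p N)
  have hmod : (P % p N).degree < N := by
    have := EuclideanDomain.mod_lt P hp0
    rw [← hdeg N]; exact this
  have hdiv : (P / p N).degree < N := by
    by_cases hlt : P.degree < (p N).degree
    · rw [(Polynomial.div_eq_zero_iff hp0).2 hlt]
      simp
    · have h1 := Polynomial.degree_add_div hp0 (not_lt.1 hlt)
      rw [hdeg] at h1
      rw [← h1] at hP
      by_contra hcon
      have : (N : WithBot ℕ) + N ≤ N + (P / p N).degree := by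
        gcongr
        exact not_lt.1 hcon
      have h2 := lt_of_le_of_lt this hP
      rw [two_mul] at h2
      push_cast at h2
      exact lt_irrefl _ h2
  have h1 : I P = I (P % p N) := by
    conv_lhs => rw [← hPe]
    rw [map_add, aux_orth_zero I p hdeg horth N N le_rfl _ hdiv, zero_add]
  have h2 : P % p N = Lagrange.interpolate (range N) v (fun k => P.eval (v k)) := by
    apply Lagrange.eq_interpolate_of_eval_eq _ hv
    · simpa using hmod
    · intro k hk
      conv_rhs => rw [← hPe]
      simp [hroot k (Finset.mem_range.1 hk)]
  rw [h1, h2, Lagrange.interpolate_apply, map_sum]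
  refine Finset.sum_congr rfl fun k _ => ?_
  rw [← smul_eq_C_mul, map_smul, smul_eq_mul]

open Polynomial in
lemma aux_weight (I : ℝ[X] →ₗ[ℝ] ℝ) (a : ℝ)
    (hI : ∀ r : ℝ[X], I (X * derivative r) + (a + 1) * I r - I (X * r) = 0)
    (p : ℕ → ℝ[X]) (hdeg : ∀ l, (p l).degree = l)
    (horth : ∀ l k, I (p l * p k) = if l = k then 1 else 0)
    (q : ℕ → ℝ[X]) (hqdeg : ∀ l, (q l).degree = l)
    (hqorth : ∀ l k, I (X * (q l * q k)) = if l = k then 1 else 0)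
    (M : ℕ) (v : ℕ → ℝ)
    (hv : Set.InjOn v (range (M + 1) : Finset ℕ)) (hv0 : ∀ k < M + 1, v k ≠ 0)
    (hroot : ∀ k < M + 1, (p (M + 1)).eval (v k) = 0) (k : ℕ) (hk : k < M + 1) :
    I (Lagrange.basis (range (M + 1)) v k) =
      ((M : ℝ) + 1)⁻¹ * ((v k)⁻¹ * (((q M).eval (v k)) ^ 2)⁻¹) := by
  set P := p (M + 1) with hP
  have hPd : P.degree = ((M + 1 : ℕ) : WithBot ℕ) := hdeg _
  have hQd : (q M).degree = (M : WithBot ℕ) := hqdeg _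
  set A := P.coeff (M + 1) with hA
  set B := (q M).coeff M with hB
  have hA0 : A ≠ 0 := Polynomial.coeff_ne_zero_of_eq_degree hPd
  have hB0 : B ≠ 0 := Polynomial.coeff_ne_zero_of_eq_degree hQd
  let J : ℝ[X] →ₗ[ℝ] ℝ := I ∘ₗ (LinearMap.mulLeft ℝ X)
  have hJ : ∀ r, J r = I (X * r) := fun r => rfl
  have hJorth : ∀ l k, J (q l * q k) = if l = k then 1 else 0 := hqorth
  -- degree bound for derivative
  have hdd : ∀ (d : ℕ) (r : ℝ[X]), r.degree < ((d + 1 : ℕ) : WithBot ℕ) → (X * derivative r).degree < ((d + 1 : ℕ) : WithBot ℕ) := by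
    intro d r hr
    rw [Polynomial.degree_lt_iff_coeff_zero] at hr ⊢
    intro j hj
    obtain ⟨j, rfl⟩ : ∃ i, j = i + 1 := ⟨j - 1, by omega⟩
    rw [coeff_X_mul, coeff_derivative, hr _ hj, zero_mul]
  have ha : ∀ r : ℝ[X], r.degree < ((M + 1 : ℕ) : WithBot ℕ) → J (derivative P * r) = I (P * (X * r)) := by
    intro r hr
    have h1 := hI (P * r)
    have h2 : I (P * r) = 0 := aux_orth_zero I p hdeg horth (M + 1) (M + 1) le_rfl r hr
    have h3 : I (P * (X * derivative r)) = 0 :=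
      aux_orth_zero I p hdeg horth (M + 1) (M + 1) le_rfl _ (hdd _ _ hr)
    have h4 : X * derivative (P * r) = X * (derivative P * r) + P * (X * derivative r) := by
      rw [derivative_mul]; ring
    rw [h4, map_add, h2, h3] at h1
    rw [hJ, show P * (X * r) = X * (P * r) by ring]
    linarith
  have hdP : (derivative P).degree < ((M + 1 : ℕ) : WithBot ℕ) := by
    rw [Polynomial.degree_lt_iff_coeff_zero]
    intro j hj
    rw [coeff_derivative, Polynomial.coeff_eq_zero_of_degree_lt (by rw [hPd]; exact_mod_cast (by omega)), zero_mul]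
  have hcd : (derivative P).coeff M = A * (M + 1) := by rw [coeff_derivative]
  set c := A * (M + 1) / B with hc
  have hPq : derivative P = C c * q M := by
    rw [← sub_eq_zero]
    have hred := aux_reduce (q M) (derivative P) M hQd hdP
    rw [hcd] at hred
    apply aux_orth_eq_zero J q hqdeg hJorth M _ hred
    intro j hj
    have hjM : (q j).degree < M := by rw [hqdeg]; exact_mod_cast hj
    have e1 : J (derivative P * q j) = 0 := by
      rw [ha _ (hjM.trans (by exact_mod_cast Nat.lt_succ_self M))]
      apply aux_orth_zero I p hdeg horth (M + 1) (M + 1) le_rfl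
      rw [degree_mul, hqdeg, degree_X]
      norm_cast
      omega
    have e2 : J (q j * q M) = 0 := by rw [hJorth, if_neg (by omega)]
    rw [mul_sub, mul_left_comm, ← smul_eq_C_mul, map_sub, map_smul, e2, mul_comm, e1]
    simp
  have hc2 : c = B / A := by
    have h1 : J (derivative P * q M) = c := by
      rw [hPq, mul_assoc, ← smul_eq_C_mul, map_smul, hJorth]; simp
    rw [← h1, ha _ (by rw [hQd]; exact_mod_cast Nat.lt_succ_self M),
      aux_orth_coeff I p hdeg horth (M + 1)]
    · rw [coeff_X_mul]
    · rw [degree_mul, hQd, degree_X]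
      norm_cast
      omega
  -- nodal
  have hnod : P = C A * Lagrange.nodal (range (M + 1)) v := by
    apply Polynomial.eq_of_degree_le_of_eval_index_eq _ hv (f := P)
    · rw [hPd]; simp
    · rw [degree_C_mul hA0, Lagrange.degree_nodal, hPd]; simp
    · rw [leadingCoeff_mul, Lagrange.nodal_monic.leadingCoeff, leadingCoeff_C, mul_one, leadingCoeff,
        natDegree_eq_of_degree_eq_some hPd]
    · intro i hi
      rw [hroot i (Finset.mem_range.1 hi), eval_mul, Lagrange.eval_nodal_at_node hi, mul_zero]
  have hkm : k ∈ range (M + 1) := Finset.mem_range.2 hk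
  have hPk : (derivative P).eval (v k) = A * ∏ j ∈ (range (M + 1)).erase k, (v k - v j) := by
    rw [hnod, derivative_C_mul, eval_mul, Lagrange.eval_nodal_derivative_eval_node_eq hkm,
      Lagrange.eval_nodal, eval_C]
  have hprod : ∏ j ∈ (range (M + 1)).erase k, (v k - v j) ≠ 0 := by
    rw [Finset.prod_ne_zero_iff]
    intro j hj
    rw [Finset.mem_erase] at hj
    exact sub_ne_zero.2 fun h => hj.1 (hv hj.2 hkm h.symm)
  set D := ∏ j ∈ (range (M + 1)).erase k, (v k - v j) with hD
  have hQk : c * (q M).eval (v k) = A * D := by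
    rw [← hPk, hPq]; simp
  set L := Lagrange.basis (range (M + 1)) v k with hL
  have hLd : L.degree = (M : WithBot ℕ) := by
    rw [Lagrange.degree_basis hv hkm]; simp
  have hLc : L.coeff M = D⁻¹ := by
    have := Lagrange.leadingCoeff_basis hv hkm
    rw [leadingCoeff, natDegree_eq_of_degree_eq_some hLd] at this
    rw [this, hD]
  have hJL : J (q M * L) = D⁻¹ / B := by
    rw [aux_orth_coeff J q hqdeg hJorth M L (by rw [hLd]; exact_mod_cast Nat.lt_succ_self M), hLc]
  have hJL2 : J (q M * L) = v k * (q M).eval (v k) * I L := by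
    rw [hJ, aux_gauss I p hdeg horth (M + 1) v hv hroot]
    · rw [Finset.sum_eq_single k]
      · simp only [eval_mul, eval_X]
        rw [hL, Lagrange.eval_basis_self hv hkm]; ring
      · intro j hj hjk
        simp only [eval_mul, eval_X]
        rw [hL, Lagrange.eval_basis_of_ne (Ne.symm hjk) hj]; ring
      · intro h; exact absurd hkm h
    · rw [degree_mul, degree_mul, degree_X, hQd, hLd]
      norm_cast
      omega
  rw [hJL] at hJL2
  set Q := (q M).eval (v k) with hQ
  have hQ0 : Q ≠ 0 := by
    intro h; rw [h, mul_zero] at hQk; exact mul_ne_zero hA0 hprod hQk.symm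
  have hv0k := hv0 k hk
  have hM0 : (M : ℝ) + 1 ≠ 0 := by positivity
  have hBB : B ^ 2 = A ^ 2 * (M + 1) := by
    rw [hc] at hc2
    field_simp at hc2
    linarith
  have hIL : I L = D⁻¹ / B / (v k * Q) := by
    rw [hJL2]; field_simp
  have hDe : D = B * Q / A ^ 2 := by
    rw [hc2] at hQk
    field_simp at hQk ⊢
    linarith
  rw [hIL, hDe]
  field_simp
  rw [hBB]
open Polynomial in
lemma aux_int_pow (a : ℝ) (ha : -1 < a) (k : ℕ) :
    IntegrableOn (fun x : ℝ => x ^ k * (x ^ a * Real.exp (-x))) (Set.Ioi 0) := by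
  have h := Real.GammaIntegral_convergent (s := a + 1 + k) (by have := Nat.cast_nonneg (α := ℝ) k; linarith)
  refine h.congr_fun (fun x hx => ?_) measurableSet_Ioi
  have hx' : (0 : ℝ) < x := hx
  simp only
  rw [show a + 1 + (k : ℝ) - 1 = a + k by ring, Real.rpow_add hx', Real.rpow_natCast]
  ring

lemma aux_int_pow_eq (a : ℝ) (ha : -1 < a) (k : ℕ) :
    ∫ x in Set.Ioi (0 : ℝ), x ^ k * (x ^ a * Real.exp (-x)) = Real.Gamma (a + 1 + k) := by
  rw [Real.Gamma_eq_integral (by have := Nat.cast_nonneg (α := ℝ) k; linarith)]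
  refine setIntegral_congr_fun measurableSet_Ioi (fun x hx => ?_)
  have hx' : (0 : ℝ) < x := hx
  rw [show a + 1 + (k : ℝ) - 1 = a + k by ring, Real.rpow_add hx', Real.rpow_natCast]
  ring

open Polynomial in
lemma aux_int_poly (a : ℝ) (ha : -1 < a) (P : ℝ[X]) :
    IntegrableOn (fun x : ℝ => P.eval x * (x ^ a * Real.exp (-x))) (Set.Ioi 0) := by
  induction P using Polynomial.induction_on' with
  | add P Q hP hQ =>
    refine (hP.add hQ).congr_fun (fun x _ => ?_) measurableSet_Ioi
    simp [add_mul]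
  | monomial k c =>
    refine IntegrableOn.congr_fun (Integrable.const_mul (aux_int_pow a ha k) c) (fun x _ => ?_) measurableSet_Ioi
    simp [mul_assoc]

open Polynomial in
/-- the moment functional of the Laguerre weight -/
def lagI (a : ℝ) (ha : -1 < a) : ℝ[X] →ₗ[ℝ] ℝ where
  toFun P := ∫ x in Set.Ioi (0 : ℝ), P.eval x * (x ^ a * Real.exp (-x))
  map_add' P Q := by
    rw [← integral_add (aux_int_poly a ha P) (aux_int_poly a ha Q)]
    simp only [Polynomial.eval_add, add_mul]
  map_smul' c P := by
    simp only [Polynomial.eval_smul, smul_eq_mul, mul_assoc, RingHom.id_apply]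
    rw [integral_const_mul]

open Polynomial in
lemma lagI_apply (a : ℝ) (ha : -1 < a) (P : ℝ[X]) :
    lagI a ha P = ∫ x in Set.Ioi (0 : ℝ), P.eval x * (x ^ a * Real.exp (-x)) := rfl

open Polynomial in
lemma lagI_monomial (a : ℝ) (ha : -1 < a) (k : ℕ) (c : ℝ) :
    lagI a ha (monomial k c) = c * Real.Gamma (a + 1 + k) := by
  rw [lagI_apply, ← aux_int_pow_eq a ha k, ← integral_const_mul]
  simp [mul_assoc]

open Polynomial in
lemma lagI_pearson (a : ℝ) (ha : -1 < a) (r : ℝ[X]) :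
    lagI a ha (X * derivative r) + (a + 1) * lagI a ha r - lagI a ha (X * r) = 0 := by
  induction r using Polynomial.induction_on' with
  | add P Q hP hQ =>
    simp only [mul_add, map_add]
    linarith
  | monomial k c =>
    have h1 : (X : ℝ[X]) * monomial k c = monomial (k + 1) c := by
      rw [X_mul_monomial]
    have h2 : (X : ℝ[X]) * derivative (monomial k c) = monomial k (c * k) := by
      rw [derivative_monomial, X_mul_monomial]
      rcases k with _ | k
      · simp
      · simp
    rw [h1, h2, lagI_monomial, lagI_monomial, lagI_monomial]
    push_cast
    rw [← add_assoc, Real.Gamma_add_one (by have := Nat.cast_nonneg (α := ℝ) k; exact ne_of_gt (by linarith))]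
    ring

/-- span of monomials with degree at most `D` in each variable -/
def monSpan (n D : ℕ) : Submodule ℝ ((Fin n → ℝ) → ℝ) :=
  Submodule.span ℝ ((fun (e : Fin n → ℕ) (x : Fin n → ℝ) => ∏ j, x j ^ e j) '' {e | ∀ j, e j ≤ D})

lemma monSpan_mul {n a b : ℕ} {f g : (Fin n → ℝ) → ℝ} (hf : f ∈ monSpan n a)
    (hg : g ∈ monSpan n b) : f * g ∈ monSpan n (a + b) := by
  have h := Submodule.mul_mem_mul hf hg
  rw [monSpan, monSpan, Submodule.span_mul_span] at h
  refine Submodule.span_mono ?_ h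
  rintro _ ⟨_, ⟨e, he, rfl⟩, _, ⟨d, hd, rfl⟩, rfl⟩
  refine ⟨e + d, fun j => add_le_add (he j) (hd j), ?_⟩
  funext x
  simp [pow_add, Finset.prod_mul_distrib]

lemma pSpace_le {m n : ℕ} : pSpace m n ≤ monSpan n m := by
  rw [pSpace, Submodule.span_le]
  rintro _ ⟨lam, hl, rfl⟩
  have : msym n lam = ∑ mu ∈ Finset.univ.image (fun σ : Equiv.Perm (Fin n) => lam ∘ σ),
      (fun (x : Fin n → ℝ) => ∏ j, x j ^ mu j) := by
    funext x; simp [msym]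
  rw [this]
  refine Submodule.sum_mem _ fun mu hmu => Submodule.subset_span ⟨mu, fun j => ?_, rfl⟩
  obtain ⟨σ, -, rfl⟩ := Finset.mem_image.1 hmu
  have hl' := (Finset.mem_filter.1 (Finset.mem_coe.1 hl)).1
  have := Fintype.mem_piFinset.1 hl' (σ j)
  simp at this ⊢
  omega

lemma vand_sq {n : ℕ} (x : Fin n → ℝ) : vand n x ^ 2 = (Matrix.vandermonde x).det ^ 2 := by
  rw [Matrix.det_vandermonde, vand, ← Finset.prod_pow, ← Finset.prod_pow]
  refine Finset.prod_congr rfl fun i _ => ?_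
  rw [← Finset.prod_pow, ← Finset.prod_pow]
  refine Finset.prod_congr (by ext; simp) fun j _ => by ring

lemma det_mem {n : ℕ} : (fun x : Fin n → ℝ => (Matrix.vandermonde x).det) ∈ monSpan n (n - 1) := by
  have : (fun x : Fin n → ℝ => (Matrix.vandermonde x).det) =
      ∑ σ : Equiv.Perm (Fin n), ((Equiv.Perm.sign σ : ℤ) : ℝ) •
        (fun (x : Fin n → ℝ) => ∏ j, x j ^ ((σ.symm j : Fin n) : ℕ)) := by
    funext x
    simp only [Matrix.det_apply', Finset.sum_apply, Pi.smul_apply, smul_eq_mul,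
      Matrix.vandermonde_apply]
    refine Finset.sum_congr rfl fun σ _ => ?_
    congr 1
    exact Fintype.prod_equiv σ _ _ (fun i => by simp)
  rw [this]
  refine Submodule.sum_mem _ fun σ _ => Submodule.smul_mem _ _ (Submodule.subset_span ⟨_, fun j => ?_, rfl⟩)
  have := (σ.symm j).2
  omega

lemma pSpace_symm {m n : ℕ} {f : (Fin n → ℝ) → ℝ} (hf : f ∈ pSpace m n) (σ : Equiv.Perm (Fin n))
    (x : Fin n → ℝ) : f (x ∘ σ) = f x := by
  induction hf using Submodule.span_induction with
  | mem g hg =>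
    obtain ⟨lam, -, rfl⟩ := hg
    simp only [msym]
    refine Finset.sum_bij (fun mu _ => mu ∘ σ.symm) ?_ ?_ ?_ ?_
    · intro mu hmu
      obtain ⟨τ, -, rfl⟩ := Finset.mem_image.1 hmu
      exact Finset.mem_image.2 ⟨σ.symm.trans τ, Finset.mem_univ _, rfl⟩
    · intro a _ b _ hab
      exact σ.symm.surjective.injective_comp_right hab
    · intro mu hmu
      obtain ⟨τ, -, rfl⟩ := Finset.mem_image.1 hmu
      refine ⟨lam ∘ (σ.trans τ), Finset.mem_image.2 ⟨_, Finset.mem_univ _, rfl⟩, ?_⟩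
      funext j; simp
    · intro mu _
      exact Fintype.prod_equiv σ _ _ (fun i => by simp)
  | zero => rfl
  | add f g _ _ hf hg => simp [hf, hg]
  | smul c f _ hf => simp [hf]

lemma vand_sq_symm {n : ℕ} (σ : Equiv.Perm (Fin n)) (x : Fin n → ℝ) :
    vand n (x ∘ σ) ^ 2 = vand n x ^ 2 := by
  rw [vand_sq, vand_sq]
  have : Matrix.vandermonde (x ∘ σ) = (Matrix.vandermonde x).submatrix σ id := by
    ext; simp [Matrix.vandermonde_apply]
  rw [this, Matrix.det_permute, mul_pow]
  have : ((Equiv.Perm.sign σ : ℤ) : ℝ) ^ 2 = 1 := by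
    rcases Int.units_eq_one_or (Equiv.Perm.sign σ) with h | h <;> simp [h]
  rw [this, one_mul]

/-- tensor-product cubature -/
lemma aux_cub (n N : ℕ) (a : ℝ) (ha : -1 < a) (v w : ℕ → ℝ)
    (hq : ∀ e < 2 * N, ∫ x in Set.Ioi (0 : ℝ), x ^ e * (x ^ a * Real.exp (-x)) =
      ∑ k ∈ range N, v k ^ e * w k) (D : ℕ) (hD : D < 2 * N)
    (F : (Fin n → ℝ) → ℝ) (hF : F ∈ monSpan n D) :
    IntegrableOn (fun x : Fin n → ℝ => F x * (∏ j, (x j) ^ a * Real.exp (-(x j))))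
      (Set.univ.pi (fun _ => Set.Ioi (0 : ℝ))) ∧
    ∫ x : Fin n → ℝ in Set.univ.pi (fun _ => Set.Ioi (0 : ℝ)),
        F x * (∏ j, (x j) ^ a * Real.exp (-(x j))) =
      ∑ k ∈ Fintype.piFinset (fun _ : Fin n => range N), F (v ∘ k) * ∏ j, w (k j) := by
  have hres : (volume : Measure (Fin n → ℝ)).restrict (Set.univ.pi (fun _ => Set.Ioi (0 : ℝ))) =
      Measure.pi (fun _ => (volume : Measure ℝ).restrict (Set.Ioi 0)) := by
    rw [volume_pi, Measure.restrict_pi_pi]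
  unfold IntegrableOn
  rw [hres]
  induction hF using Submodule.span_induction with
  | mem g hg =>
    obtain ⟨e, he, rfl⟩ := hg
    simp only [← Finset.prod_mul_distrib]
    constructor
    · exact Integrable.fintype_prod (f := fun j (x : ℝ) => x ^ e j * (x ^ a * Real.exp (-x)))
        (fun j => aux_int_pow a ha (e j))
    · rw [integral_fintype_prod_eq_prod (fun j (x : ℝ) => x ^ e j * (x ^ a * Real.exp (-x)))]
      simp only [Function.comp_apply]
      rw [← Finset.prod_univ_sum (fun _ => range N) (fun j k => v k ^ e j * w k)]
      exact Finset.prod_congr rfl fun j _ => hq _ (lt_of_le_of_lt (he j) hD)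
  | zero => simp
  | add f g _ _ hf hg =>
    simp only [Pi.add_apply, add_mul, Finset.sum_add_distrib]
    exact ⟨hf.1.add hg.1, by rw [integral_add hf.1 hg.1, hf.2, hg.2]⟩
  | smul c f _ hf =>
    simp only [Pi.smul_apply, smul_eq_mul, mul_assoc, ← Finset.mul_sum]
    exact ⟨hf.1.const_mul c, by rw [integral_const_mul, hf.2]⟩

lemma aux_comb (m n : ℕ) (G : (Fin n → ℕ) → ℝ)
    (hsym : ∀ (σ : Equiv.Perm (Fin n)) k, G (k ∘ σ) = G k)
    (hinj : ∀ k ∈ Fintype.piFinset (fun _ : Fin n => range (m + n)), ¬ Function.Injective k → G k = 0) :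
    ∑ k ∈ Fintype.piFinset (fun _ : Fin n => range (m + n)), G k =
      n.factorial * ∑ lh ∈ Lam m n, G (fun j => lh j + (n - 1 - (j : ℕ))) := by
  have hanti : ∀ lh ∈ Lam m n, StrictAnti (fun j : Fin n => lh j + (n - 1 - (j : ℕ))) := by
    intro lh hl i j hij
    have h1 := (Finset.mem_filter.1 hl).2 i j hij.le
    have h2 : (i : ℕ) < j := hij
    have := j.2
    simp only
    omega
  have h1 : ∑ x ∈ (Lam m n) ×ˢ (Finset.univ : Finset (Equiv.Perm (Fin n))),
      G ((fun j => x.1 j + (n - 1 - (j : ℕ))) ∘ x.2) =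
      n.factorial * ∑ lh ∈ Lam m n, G (fun j => lh j + (n - 1 - (j : ℕ))) := by
    rw [Finset.sum_product, Finset.mul_sum]
    refine Finset.sum_congr rfl fun lh _ => ?_
    simp only [hsym]
    simp [Fintype.card_perm]
  rw [← h1]
  symm
  refine Finset.sum_bij_ne_zero (fun x _ _ => (fun j => x.1 j + (n - 1 - (j : ℕ))) ∘ x.2) ?_ ?_ ?_ ?_
  · rintro ⟨lh, σ⟩ hx -
    rw [Finset.mem_product] at hx
    rw [Fintype.mem_piFinset]
    intro j
    have h2 := Fintype.mem_piFinset.1 (Finset.mem_filter.1 hx.1).1 (σ j)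
    have h3 := (σ j).2
    simp at h2 ⊢
    omega
  · rintro ⟨lh, σ⟩ hx - ⟨lh', σ'⟩ hx' - heq
    rw [Finset.mem_product] at hx hx'
    simp only at hx hx' heq
    have hr := congrArg Set.range heq
    rw [σ.surjective.range_comp, σ'.surjective.range_comp,
      (hanti lh hx.1).range_inj (hanti lh' hx'.1)] at hr
    have hl : lh = lh' := by
      funext j
      have := congrFun hr j
      simpa using this
    subst hl
    have : σ = σ' := by
      ext j
      have := (hanti lh hx.1).injective (congrFun heq j)
      rw [this]
    rw [this]
  · intro k hk hG
    have hki : Function.Injective k := by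
      by_contra h; exact hG (hinj k hk h)
    set τ : Equiv.Perm (Fin n) := Fin.revPerm.trans (Tuple.sort k) with hτ
    have hka : StrictAnti (k ∘ τ) := by
      have hm : StrictMono (k ∘ Tuple.sort k) :=
        (Tuple.monotone_sort k).strictMono_of_injective (hki.comp (Tuple.sort k).injective)
      intro i j hij
      exact hm (Fin.rev_lt_rev.2 hij)
    have hge : ∀ (d : ℕ) (j : Fin n), n - 1 - (j : ℕ) = d → d ≤ k (τ j) := by
      intro d
      induction d with
      | zero => intros; exact Nat.zero_le _
      | succ d ih =>
        intro j hj
        have h2 := ih ⟨j + 1, by omega⟩ (by simp only; omega)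
        have h3 : k (τ ⟨j + 1, by omega⟩) < k (τ j) := hka (Fin.mk_lt_mk.2 (by simp) : j < ⟨j + 1, by omega⟩)
        omega
    have hkN : ∀ j, k j < m + n := fun j => by
      have := Fintype.mem_piFinset.1 hk j
      simpa using this
    have hle : ∀ (d : ℕ) (j : Fin n), (j : ℕ) = d → k (τ j) + d + 1 ≤ m + n := by
      intro d
      induction d with
      | zero => intro j _; have := hkN (τ j); omega
      | succ d ih =>
        intro j hj
        have h2 := ih ⟨d, by omega⟩ rfl
        have h3 : k (τ j) < k (τ ⟨d, by omega⟩) := hka (by rw [Fin.lt_def]; simp only; omega)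
        omega
    have hstep : ∀ (i j : Fin n), i ≤ j → k (τ j) + (j - i : ℕ) ≤ k (τ i) := by
      intro i j hij
      obtain ⟨d, hd⟩ : ∃ d, (j : ℕ) = i + d := ⟨j - i, by have : (i : ℕ) ≤ j := hij; omega⟩
      clear hij
      induction d generalizing j with
      | zero =>
        have : j = i := Fin.ext (by omega)
        subst this; simp
      | succ d ih =>
        have hjn := j.2
        have h2 := ih ⟨i + d, by omega⟩ rfl
        have h3 : k (τ j) < k (τ ⟨i + d, by omega⟩) := hka (by rw [Fin.lt_def]; simp only; omega)
        simp only at h2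
        omega
    have heq : (fun j : Fin n => (k (τ j) - (n - 1 - (j : ℕ))) + (n - 1 - (j : ℕ))) ∘ (τ.symm) = k := by
      funext j
      have := hge _ (τ.symm j) rfl
      simp only [Function.comp_apply]
      rw [Nat.sub_add_cancel this]
      simp
    refine ⟨(fun j => k (τ j) - (n - 1 - (j : ℕ)), τ.symm), ?_, ?_, heq⟩
    · rw [Finset.mem_product]
      refine ⟨?_, Finset.mem_univ _⟩
      rw [Lam, Finset.mem_filter, Fintype.mem_piFinset]
      constructor
      · intro j
        have := hle _ j rfl
        have := hge _ j rfl
        have := j.2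
        simp only [Finset.mem_range]
        omega
      · intro i j hij
        have := hstep i j hij
        have := hge _ j rfl
        have := j.2
        have : (i : ℕ) ≤ j := hij
        simp only
        omega
    · simp only [heq]; exact hG
  · intro x _ _; rfl

theorem gauss_laguerre_cubature_LUE
    (n : ℕ) (hn : 0 < n) (m : ℕ)
    (α : ℝ) (hα : -1 < α)
    -- the normalized Laguerre polynomials ℓ^{(α)}: orthonormal w.r.t. x^α e^{-x} on (0,∞)
    (p : ℕ → Polynomial ℝ)
    (hdeg : ∀ l, (p l).degree = l)
    (hlead : ∀ l, 0 < (p l).leadingCoeff)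
    (horth : ∀ l k, (∫ x in Set.Ioi (0 : ℝ),
        (p l).eval x * (p k).eval x * (x ^ α * Real.exp (-x)))
      = if l = k then 1 else 0)
    -- the normalized Laguerre polynomials ℓ^{(α+1)}: orthonormal w.r.t. x^{α+1} e^{-x} on (0,∞)
    (q : ℕ → Polynomial ℝ)
    (hqdeg : ∀ l, (q l).degree = l)
    (hqlead : ∀ l, 0 < (q l).leadingCoeff)
    (hqorth : ∀ l k, (∫ x in Set.Ioi (0 : ℝ),
        (q l).eval x * (q k).eval x * (x ^ (α + 1) * Real.exp (-x)))
      = if l = k then 1 else 0)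
    -- the ordered roots of ℓ^{(α)}_{m+n} in (0,∞)
    (xr : ℕ → ℝ)
    (hxr_mem : ∀ l < m + n, xr l ∈ Set.Ioi (0 : ℝ))
    (hxr_mono : ∀ k l : ℕ, k < l → l < m + n → xr k < xr l)
    (hxr_root : ∀ l < m + n, (p (m + n)).eval (xr l) = 0)
    -- a symmetric polynomial of degree at most 2m+1 in each variable
    (f : (Fin n → ℝ) → ℝ)
    (hf : f ∈ pSpace (2 * m + 1) n) :
    (1 / (n.factorial : ℝ)) *
      (∫ x : Fin n → ℝ in Set.univ.pi (fun _ => Set.Ioi (0 : ℝ)),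
        f x * (∏ j, (x j) ^ α * Real.exp (-(x j))) * vand n x ^ 2)
    = ∑ lh ∈ Lam m n,
        f (node n xr lh) *
          ((((m : ℝ) + n) ^ n)⁻¹ *
            (∏ j : Fin n, (xr (lh j + (n - 1 - (j : ℕ))))⁻¹ *
              (((q (m + n - 1)).eval (xr (lh j + (n - 1 - (j : ℕ))))) ^ 2)⁻¹) *
            vand n (node n xr lh) ^ 2) := by
  obtain ⟨M, hM⟩ : ∃ M, m + n = M + 1 := ⟨m + n - 1, by omega⟩
  have hinjv : Set.InjOn xr (range (m + n) : Finset ℕ) := by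
    intro i hi j hj hij
    simp only [Finset.coe_range, Set.mem_Iio] at hi hj
    rcases lt_trichotomy i j with h | h | h
    · exact absurd hij (hxr_mono i j h hj).ne
    · exact h
    · exact absurd hij (hxr_mono j i h hi).ne'
  have hpI : ∀ l k, lagI α hα (p l * p k) = if l = k then 1 else 0 := by
    intro l k
    rw [← horth l k, lagI_apply]
    simp only [Polynomial.eval_mul]
  have hqI : ∀ l k, lagI α hα (Polynomial.X * (q l * q k)) = if l = k then 1 else 0 := by
    intro l k
    rw [← hqorth l k, lagI_apply]
    refine setIntegral_congr_fun measurableSet_Ioi (fun x hx => ?_)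
    have hx' : (0 : ℝ) < x := hx
    simp only [Polynomial.eval_mul, Polynomial.eval_X]
    rw [Real.rpow_add hx', Real.rpow_one]
    ring
  set w : ℕ → ℝ := fun k => ((m : ℝ) + n)⁻¹ * ((xr k)⁻¹ * (((q (m + n - 1)).eval (xr k)) ^ 2)⁻¹) with hw
  have hwk : ∀ k < m + n, lagI α hα (Lagrange.basis (range (m + n)) xr k) = w k := by
    intro k hk
    have hMr : (m : ℝ) + n = M + 1 := by exact_mod_cast hM
    simp only [hw]
    rw [hMr, hM, Nat.add_sub_cancel]
    rw [hM] at hinjv hxr_mem hxr_root hk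
    exact aux_weight (lagI α hα) α (lagI_pearson α hα) p hdeg hpI q hqdeg hqI M xr hinjv
      (fun k hk => (hxr_mem k hk).ne') hxr_root k hk
  have hquad : ∀ e < 2 * (m + n), ∫ x in Set.Ioi (0 : ℝ), x ^ e * (x ^ α * Real.exp (-x)) =
      ∑ k ∈ range (m + n), xr k ^ e * w k := by
    intro e he
    have h1 := aux_gauss (lagI α hα) p hdeg hpI (m + n) xr hinjv hxr_root (Polynomial.X ^ e)
      (by rw [Polynomial.degree_X_pow]; exact_mod_cast he)
    rw [lagI_apply] at h1
    simp only [Polynomial.eval_pow, Polynomial.eval_X] at h1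
    rw [h1]
    exact Finset.sum_congr rfl fun k hk => by rw [hwk k (Finset.mem_range.1 hk)]
  set F : (Fin n → ℝ) → ℝ := fun x => f x * vand n x ^ 2 with hF
  have hFm : F ∈ monSpan n (2 * m + 1 + ((n - 1) + (n - 1))) := by
    have := monSpan_mul (pSpace_le hf) (monSpan_mul (det_mem (n := n)) (det_mem (n := n)))
    convert this using 1
    funext x
    simp only [hF, Pi.mul_apply]
    rw [vand_sq, sq]
  have hcub := (aux_cub n (m + n) α hα xr w hquad _ (by omega) F hFm).2
  have hlhs : (∫ x : Fin n → ℝ in Set.univ.pi (fun _ => Set.Ioi (0 : ℝ)),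
        f x * (∏ j, (x j) ^ α * Real.exp (-(x j))) * vand n x ^ 2) =
      ∫ x : Fin n → ℝ in Set.univ.pi (fun _ => Set.Ioi (0 : ℝ)),
        F x * (∏ j, (x j) ^ α * Real.exp (-(x j))) := by
    congr 1
    funext x
    simp only [hF]
    ring
  rw [hlhs, hcub, aux_comb m n (fun k => F (xr ∘ k) * ∏ j, w (k j))]
  · rw [← mul_assoc, one_div, inv_mul_cancel₀ (by exact_mod_cast n.factorial_ne_zero), one_mul]
    refine Finset.sum_congr rfl fun lh _ => ?_
    have hnode : (xr ∘ fun j : Fin n => lh j + (n - 1 - (j : ℕ))) = node n xr lh := rfl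
    simp only [hnode, hF, hw]
    rw [Finset.prod_mul_distrib]
    simp only [Finset.prod_const, Finset.card_univ, Fintype.card_fin, inv_pow]
    ring
  · intro σ k
    simp only [hF]
    rw [← Function.comp_assoc, pSpace_symm hf, vand_sq_symm]
    congr 1
    exact Fintype.prod_equiv σ _ _ (fun i => rfl)
  · intro k _ hk
    have : vand n (xr ∘ k) ^ 2 = 0 := by
      rw [vand_sq, sq_eq_zero_iff, Matrix.det_vandermonde_eq_zero_iff]
      simp only [Function.Injective, not_forall] at hk
      obtain ⟨i, j, h1, h2⟩ := hk
      exact ⟨i, j, by simp [h1], h2⟩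
    simp only [hF, this]
    ring

end
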